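/- Let X be a nonempty finite set. A semimetric d : A(X) × A(X) → [0,∞) satisfies Axioms 1, 3 and 4 if, and only if, d = D^μ for some positive measure μ on 2^X, i.e., d is a μ-top-difference semimetric. -/

import Mathlib

open Classical Finset symmDiff

section PrefDefs

variable {X : Type*}

/-- The asymmetric part `R^>` of a binary relation `R`. -/
def asymPart (R : X → X → Prop) : X → X → Prop := fun x y => R x y ∧ ¬ R y x

/-- `R` is acyclic: there is no cycle of pairwise distinct elements
`z_0 R^> z_1 R^> ⋯ R^> z_k R^> z_0`. -/
def AcyclicRel (R : X → X → Prop) : Prop :=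
  ¬ ∃ (k : ℕ) (z : Fin (k + 1) → X), Function.Injective z ∧
      ∀ i : Fin (k + 1), asymPart R (z i) (z (i + 1))

/-- An acyclic order: a reflexive acyclic binary relation. -/
def AcyclicOrd (R : X → X → Prop) : Prop := Reflexive R ∧ AcyclicRel R

/-- `M(S,R)`: the set of `R`-maximal elements of `S`. -/
noncomputable def MaxSet [DecidableEq X] (S : Finset X) (R : X → X → Prop) : Finset X :=
  S.filter fun x => ∀ y ∈ S, ¬ asymPart R y x

/-- The μ-top-difference semimetric, where the measure μ is given by the
weights `w x = μ {x}`. -/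
noncomputable def Dmu [Fintype X] [DecidableEq X] (w : X → ℝ) (R R' : X → X → Prop) : ℝ :=
  ∑ S : Finset X, ∑ x ∈ symmDiff (MaxSet S R) (MaxSet S R'), w x

/-- The top-difference semimetric `D`. -/
noncomputable def Dtop [Fintype X] [DecidableEq X] (R R' : X → X → Prop) : ℕ :=
  ∑ S : Finset X, (symmDiff (MaxSet S R) (MaxSet S R')).card

/-- `≿ ⊕ (a,b)`: if `b ∼ a` delete `(b,a)`, if `a, b` are `≿`-incomparable add `(a,b)`. -/
def oplusR (R : X → X → Prop) (a b : X) : X → X → Prop :=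
  fun x y => (R x y ∧ ¬(R b a ∧ x = b ∧ y = a)) ∨ (¬ R b a ∧ x = a ∧ y = b)

/-- `≿ ⊖ (a,b)`: delete the pair `(a,b)`. -/
def ominusR (R : X → X → Prop) (a b : X) : X → X → Prop :=
  fun x y => R x y ∧ ¬(x = a ∧ y = b)

/-- `≿ → ≿_0 ↠ ⊵` : `R0` is a one-step perturbation of `R` toward `R'`. -/
def OneStep (R R0 R' : X → X → Prop) : Prop :=
  AcyclicOrd R0 ∧
  ((∃ a b, asymPart R a b ∧ ¬ asymPart R' a b ∧
      (∀ x, asymPart R' x b → asymPart R x b) ∧ R0 = ominusR R a b) ∨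
   (∃ a b, ¬ asymPart R a b ∧ ¬ asymPart R b a ∧ asymPart R' a b ∧ R0 = oplusR R a b))

/-- `Q` is in-between `R` and `R'` : `Q` is an n-step perturbation of `R` toward `R'`
for some positive integer n. -/
def InBetween (R R' Q : X → X → Prop) : Prop :=
  ∃ (n : ℕ) (c : Fin (n + 1) → (X → X → Prop)),
    OneStep R (c 0) R' ∧
    (∀ i : Fin n, OneStep (c i.castSucc) (c i.succ) R') ∧
    c (Fin.last n) = Q

/-- `N(b,≿)`: the number of `x ≠ b` with not `x ≻ b`. -/
noncomputable def Nnum [Fintype X] (R : X → X → Prop) (b : X) : ℕ :=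
  (Finset.univ.filter fun x => x ≠ b ∧ ¬ asymPart R x b).card

/-- `≿_{ab}`: the partial order whose asymmetric part is `(X \ {a,b}) × {a,b}`. -/
def RabRel (a b : X) : X → X → Prop :=
  fun x y => x = y ∨ ((x ≠ a ∧ x ≠ b) ∧ (y = a ∨ y = b))

/-- `≿_{ab}^+`: as `≿_{ab}` but with `a` ranked strictly above `b`. -/
def RabPlusRel (a b : X) : X → X → Prop :=
  fun x y => RabRel a b x y ∨ (x = a ∧ y = b)

/-- `d` is a semimetric on the set of acyclic orders on `X`. -/
def IsSemimetricOn (d : (X → X → Prop) → (X → X → Prop) → ℝ) : Prop :=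
  (∀ R R', AcyclicOrd R → AcyclicOrd R' → 0 ≤ d R R') ∧
  (∀ R, AcyclicOrd R → d R R = 0) ∧
  (∀ R R', AcyclicOrd R → AcyclicOrd R' → d R R' = d R' R) ∧
  (∀ R R' R'', AcyclicOrd R → AcyclicOrd R' → AcyclicOrd R'' →
    d R R'' ≤ d R R' + d R' R'')

/-- Axiom 1. -/
def Axiom1 (d : (X → X → Prop) → (X → X → Prop) → ℝ) : Prop :=
  ∀ R R0 R' : X → X → Prop, AcyclicOrd R → AcyclicOrd R' →
    InBetween R R' R0 → d R R' = d R R0 + d R0 R'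

/-- Axiom 2. -/
def Axiom2 (d : (X → X → Prop) → (X → X → Prop) → ℝ) : Prop :=
  ∀ a b : X, a ≠ b → d (RabRel a b) (RabPlusRel a b) = 1

/-- Axiom 3. -/
def Axiom3 [Fintype X] (d : (X → X → Prop) → (X → X → Prop) → ℝ) : Prop :=
  (∀ (R : X → X → Prop) (a b : X), AcyclicOrd R → a ≠ b →
      ¬ asymPart R a b → ¬ asymPart R b a → AcyclicOrd (oplusR R a b) →
      d R (oplusR R a b) = (2 : ℝ) ^ (Nnum R b - 1) * d (RabRel a b) (RabPlusRel a b)) ∧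
  (∀ (R : X → X → Prop) (a b : X), AcyclicOrd R → asymPart R a b →
      d R (ominusR R a b) = (2 : ℝ) ^ (Nnum R b) * d (RabRel a b) (RabPlusRel a b))

/-- Axiom 4. -/
def Axiom4 (d : (X → X → Prop) → (X → X → Prop) → ℝ) : Prop :=
  ∀ R R' : X → X → Prop, AcyclicOrd R → AcyclicOrd R' →
    (∀ x y, asymPart R x y ↔ asymPart R' x y) → d R R' = 0

end PrefDefs


section Helpers

variable {X : Type*}

lemma exists_walk {r : X → X → Prop} {a b : X} (h : Relation.TransGen r a b) :
    ∃ (n : ℕ) (f : ℕ → X), 0 < n ∧ f 0 = a ∧ f n = b ∧ ∀ i < n, r (f i) (f (i + 1)) := by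
  induction h with
  | single h =>
    rename_i c
    refine ⟨1, fun t => if t = 0 then a else c, one_pos, by simp, by simp, ?_⟩
    intro i hi
    obtain rfl : i = 0 := by omega
    simpa using h
  | tail _ h2 ih =>
    rename_i y z _
    obtain ⟨n, f, hn, h0, h1, hs⟩ := ih
    refine ⟨n + 1, fun t => if t ≤ n then f t else z, by omega, by simp [h0], by simp, ?_⟩
    intro i hi
    rcases Nat.lt_or_ge i n with h | h
    · have : i + 1 ≤ n := h
      simp only [h.le, this, if_true]
      exact hs i h
    · obtain rfl : i = n := by omega
      simp [h1, h2]

lemma no_loop_of_acyclic {R : X → X → Prop} (h : AcyclicRel R) (x : X) :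
    ¬ Relation.TransGen (asymPart R) x x := by
  intro hx
  have hex : ∃ n : ℕ, 0 < n ∧ ∃ f : ℕ → X, f n = f 0 ∧ ∀ i < n, asymPart R (f i) (f (i + 1)) := by
    obtain ⟨n, f, hn, h0, h1, hs⟩ := exists_walk hx
    exact ⟨n, hn, f, by rw [h0, h1], hs⟩
  have hmin := fun m => @Nat.find_min _ _ hex m
  obtain ⟨hn, f, hf, hs⟩ := Nat.find_spec hex
  set n := Nat.find hex with hndef
  clear_value n
  obtain ⟨k, rfl⟩ : ∃ k, n = k + 1 := ⟨n - 1, by omega⟩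
  have key : ∀ i j : ℕ, i < j → j < k + 1 → f i ≠ f j := by
    intro i j hij hj he
    refine hmin (j - i) (by omega) ⟨by omega, fun t => f (i + t), ?_, ?_⟩
    · simp only [add_zero]
      rw [he]; congr 1; omega
    · intro t ht
      have := hs (i + t) (by omega)
      simpa [add_assoc] using this
  refine h ⟨k, fun i => f i, ?_, ?_⟩
  · intro i j hij
    by_contra hne
    rcases lt_or_gt_of_ne (fun h : (i : ℕ) = j => hne (Fin.ext h)) with h | h
    · exact key i j h j.2 hij
    · exact key j i h i.2 hij.symm
  · intro i
    have := hs i i.2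
    rcases Nat.lt_or_ge (i : ℕ) k with h | h
    · have e : ((i + 1 : Fin (k + 1)) : ℕ) = i + 1 := Fin.val_add_one_of_lt' (by omega)
      simpa only [e] using this
    · have hik : (i : ℕ) = k := by omega
      have e : i + 1 = 0 := by
        have : i = Fin.last k := Fin.ext hik
        rw [this]; simp
      rw [hik, hf] at this
      simpa [e, hik] using this

lemma acyclic_of_no_loop {R : X → X → Prop}
    (h : ∀ x, ¬ Relation.TransGen (asymPart R) x x) : AcyclicRel R := by
  rintro ⟨k, z, -, hz⟩
  have h0 : ∀ i : Fin (k + 1), Relation.ReflTransGen (asymPart R) (z 0) (z i) := by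
    intro i
    induction i using Fin.induction with
    | zero => exact .refl
    | succ i ih =>
      refine ih.tail ?_
      have := hz i.castSucc
      rwa [Fin.coeSucc_eq_succ] at this
  have h1 := hz (Fin.last k)
  rw [Fin.last_add_one] at h1
  exact h _ (Relation.TransGen.tail' (h0 _) h1)

lemma acyclic_of_rank {R : X → X → Prop} (f : X → ℕ)
    (h : ∀ x y, asymPart R x y → f x < f y) : AcyclicRel R := by
  apply acyclic_of_no_loop
  have : ∀ x y, Relation.TransGen (asymPart R) x y → f x < f y := by
    intro x y hxy
    induction hxy with
    | single h1 => exact h _ _ h1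
    | tail _ h2 ih => exact ih.trans (h _ _ h2)
  exact fun x hx => lt_irrefl _ (this x x hx)

lemma asymPart_ne {R : X → X → Prop} {a b : X} (h : asymPart R a b) : a ≠ b := by
  rintro rfl
  exact h.2 h.1

lemma asym_oplus {R : X → X → Prop} {a b : X} (hab : a ≠ b)
    (h1 : ¬ asymPart R a b) (h2 : ¬ asymPart R b a) (x y : X) :
    asymPart (oplusR R a b) x y ↔ asymPart R x y ∨ (x = a ∧ y = b) := by
  unfold asymPart oplusR at *
  by_cases hx : x = a <;> by_cases hy : y = b <;> by_cases hx' : x = b <;>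
    by_cases hy' : y = a <;> subst_vars <;> simp_all <;> tauto

lemma asym_ominus {R : X → X → Prop} {a b : X} (h : asymPart R a b) (x y : X) :
    asymPart (ominusR R a b) x y ↔ asymPart R x y ∧ ¬ (x = a ∧ y = b) := by
  unfold asymPart ominusR at *
  constructor
  · rintro ⟨⟨h1, h2⟩, h3⟩
    refine ⟨⟨h1, fun h4 => h3 ⟨h4, ?_⟩⟩, h2⟩
    rintro ⟨rfl, rfl⟩
    exact h.2 h1
  · rintro ⟨⟨h1, h2⟩, h3⟩
    exact ⟨⟨h1, h3⟩, fun h4 => h2 h4.1⟩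

lemma transGen_add_edge {r r' : X → X → Prop} {a b : X}
    (hr : ∀ x y, r' x y → r x y ∨ (x = a ∧ y = b)) {x y : X} (h : Relation.TransGen r' x y) :
    Relation.TransGen r x y ∨ (Relation.ReflTransGen r x a ∧ Relation.ReflTransGen r b y) := by
  induction h with
  | single h =>
    rcases hr _ _ h with h | ⟨rfl, rfl⟩
    · exact .inl (.single h)
    · exact .inr ⟨.refl, .refl⟩
  | tail _ h ih =>
    rcases hr _ _ h with h | ⟨rfl, rfl⟩
    · rcases ih with ih | ⟨i1, i2⟩
      · exact .inl (ih.tail h)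
      · exact .inr ⟨i1, i2.tail h⟩
    · rcases ih with ih | ⟨i1, i2⟩
      · exact .inr ⟨ih.to_reflTransGen, .refl⟩
      · exact .inr ⟨i1, .refl⟩

lemma acyclicOrd_oplus {R : X → X → Prop} {a b : X} (hR : AcyclicOrd R) (hab : a ≠ b)
    (h1 : ¬ asymPart R a b) (h2 : ¬ asymPart R b a)
    (h3 : ¬ Relation.TransGen (asymPart R) b a) : AcyclicOrd (oplusR R a b) := by
  refine ⟨fun x => .inl ⟨hR.1 x, ?_⟩, acyclic_of_no_loop fun x hx => ?_⟩
  · rintro ⟨-, rfl, rfl⟩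
    exact hab rfl
  · rcases transGen_add_edge (fun x y => (asym_oplus hab h1 h2 x y).1) hx with h | ⟨i1, i2⟩
    · exact no_loop_of_acyclic hR.2 x h
    · rcases Relation.reflTransGen_iff_eq_or_transGen.1 (i2.trans i1) with h | h
      · exact hab h
      · exact h3 h

lemma acyclicOrd_ominus {R : X → X → Prop} {a b : X} (hR : AcyclicOrd R)
    (h : asymPart R a b) : AcyclicOrd (ominusR R a b) := by
  refine ⟨fun x => ⟨hR.1 x, ?_⟩, acyclic_of_no_loop fun x hx => ?_⟩
  · rintro ⟨rfl, h'⟩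
    exact asymPart_ne h h'
  · exact no_loop_of_acyclic hR.2 x
      (Relation.TransGen.mono (fun x y h' => ((asym_ominus h x y).1 h').1) _ _ hx)

lemma path_edge {r r' : X → X → Prop} {b a : X} (h : Relation.TransGen r b a) :
    Relation.TransGen r' b a ∨ ∃ c e, Relation.TransGen r b e ∧ r c e ∧ ¬ r' c e := by
  induction h with
  | single h =>
    rename_i y
    by_cases h' : r' b y
    · exact .inl (.single h')
    · exact .inr ⟨_, _, .single h, h, h'⟩
  | tail h1 h2 ih =>
    rename_i y z
    rcases ih with ih | ih
    · by_cases h' : r' y z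
      · exact .inl (ih.tail h')
      · exact .inr ⟨_, _, h1.tail h2, h2, h'⟩
    · exact .inr ih

/-- Existence of a one-step perturbation. -/
lemma exists_oneStep [Finite X] {R R' : X → X → Prop} (hR : AcyclicOrd R) (hR' : AcyclicOrd R')
    (hne : ¬ ∀ x y, asymPart R x y ↔ asymPart R' x y) : ∃ R0, OneStep R R0 R' := by
  by_contra hno
  have hadd : ∀ a b, asymPart R' a b → ¬ asymPart R a b →
      Relation.TransGen (asymPart R) b a := by
    intro a b h1 h2
    by_contra h3
    have h4 : ¬ asymPart R b a := fun h => h3 (.single h)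
    exact hno ⟨_, acyclicOrd_oplus hR (asymPart_ne h1) h2 h4 h3, .inr ⟨a, b, h2, h4, h1, rfl⟩⟩
  have hrem : ∀ a b, asymPart R a b → ¬ asymPart R' a b →
      ∃ x, asymPart R' x b ∧ ¬ asymPart R x b := by
    intro a b h1 h2
    by_contra! h3
    exact hno ⟨_, acyclicOrd_ominus hR h1, .inl ⟨a, b, h1, h2, h3, rfl⟩⟩
  have hnone : ∀ b, ¬ ∃ a, asymPart R a b ∧ ¬ asymPart R' a b := by
    let q : X → X → Prop := fun x y => Relation.TransGen (asymPart R) y x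
    haveI : IsTrans X q := ⟨fun _ _ _ h1 h2 => h2.trans h1⟩
    haveI : Std.Irrefl q := ⟨fun x => no_loop_of_acyclic hR.2 x⟩
    have wf : WellFounded q := Finite.wellFounded_of_trans_of_irrefl q
    intro b
    induction b using wf.induction with
    | _ b ih =>
      rintro ⟨a, h1, h2⟩
      obtain ⟨x, hx1, hx2⟩ := hrem a b h1 h2
      rcases path_edge (r' := asymPart R') (hadd x b hx1 hx2) with h | ⟨c, e, h, h', h''⟩
      · exact no_loop_of_acyclic hR'.2 x (Relation.TransGen.head hx1 h)
      · exact ih e h ⟨c, h', h''⟩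
  apply hne
  intro x y
  refine ⟨fun h => ?_, fun h => ?_⟩
  · by_contra h'
    exact hnone y ⟨x, h, h'⟩
  · by_contra h'
    rcases path_edge (r' := asymPart R') (hadd x y h h') with h1 | ⟨c, e, -, h1, h2⟩
    · exact no_loop_of_acyclic hR'.2 x (Relation.TransGen.head h h1)
    · exact hnone e ⟨c, h1, h2⟩

lemma asym_Rab (a b x y : X) : asymPart (RabRel a b) x y ↔
    (x ≠ a ∧ x ≠ b) ∧ (y = a ∨ y = b) := by
  unfold asymPart RabRel
  constructor
  · rintro ⟨rfl | h, h2⟩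
    · exact absurd (.inl rfl) h2
    · exact h
  · rintro ⟨⟨h1, h2⟩, rfl | rfl⟩ <;> refine ⟨.inr (by simp_all), ?_⟩ <;> simp [*, eq_comm] <;> tauto

lemma asym_RabPlus {a b : X} (hab : a ≠ b) (x y : X) : asymPart (RabPlusRel a b) x y ↔
    asymPart (RabRel a b) x y ∨ (x = a ∧ y = b) := by
  rw [asym_Rab]
  unfold asymPart RabPlusRel RabRel
  by_cases hx : x = a <;> by_cases hy : y = b <;> by_cases hx' : x = b <;>
    by_cases hy' : y = a <;> subst_vars <;> simp_all <;> tauto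

lemma acyclicOrd_Rab (a b : X) : AcyclicOrd (RabRel a b) := by
  refine ⟨fun x => .inl rfl, acyclic_of_rank (fun x => if x = a ∨ x = b then 1 else 0) ?_⟩
  intro x y h
  rw [asym_Rab] at h
  simp [h.1, h.2]

lemma acyclicOrd_RabPlus {a b : X} (hab : a ≠ b) : AcyclicOrd (RabPlusRel a b) := by
  refine ⟨fun x => .inl (.inl rfl),
    acyclic_of_rank (fun x => if x = b then 2 else if x = a then 1 else 0) ?_⟩
  intro x y h
  rw [asym_RabPlus hab, asym_Rab] at h
  rcases h with ⟨⟨h1, h2⟩, rfl | rfl⟩ | ⟨rfl, rfl⟩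
  · simp [*]
  · simp [*]
  · simp [*]

lemma mem_MaxSet [DecidableEq X] (S : Finset X) (R : X → X → Prop) (x : X) :
    x ∈ MaxSet S R ↔ x ∈ S ∧ ∀ y ∈ S, ¬ asymPart R y x := by
  simp [MaxSet]

lemma MaxSet_congr [DecidableEq X] {R R' : X → X → Prop}
    (h : ∀ x y, asymPart R x y ↔ asymPart R' x y) (S : Finset X) : MaxSet S R = MaxSet S R' := by
  ext x
  simp [mem_MaxSet, h]

lemma Dmu_zero [Fintype X] [DecidableEq X] (w : X → ℝ) {R R' : X → X → Prop}
    (h : ∀ x y, asymPart R x y ↔ asymPart R' x y) : Dmu w R R' = 0 := by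
  unfold Dmu
  simp [MaxSet_congr h]

lemma Dmu_comm [Fintype X] [DecidableEq X] (w : X → ℝ) (R R' : X → X → Prop) :
    Dmu w R R' = Dmu w R' R := by
  unfold Dmu
  simp only [symmDiff_comm]

lemma sum_symmDiff_add [DecidableEq X] (w : X → ℝ) (M M0 M' : Finset X)
    (h1 : ∀ x, x ∈ M → x ∈ M' → x ∈ M0) (h2 : ∀ x, x ∈ M0 → x ∈ M ∨ x ∈ M') :
    ∑ x ∈ symmDiff M M', w x = ∑ x ∈ symmDiff M M0, w x + ∑ x ∈ symmDiff M0 M', w x := by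
  rw [← Finset.sum_union]
  · congr 1
    ext x
    have := h1 x
    have := h2 x
    simp only [Finset.mem_symmDiff, Finset.mem_union]
    tauto
  · rw [Finset.disjoint_left]
    intro x
    have := h1 x
    have := h2 x
    simp only [Finset.mem_symmDiff]
    tauto

lemma asym_irrefl (R : X → X → Prop) (a : X) : ¬ asymPart R a a := fun h => h.2 h.1

lemma Dmu_oneStep [Fintype X] [DecidableEq X] (w : X → ℝ) {R R0 R' : X → X → Prop}
    (h : OneStep R R0 R') : Dmu w R R' = Dmu w R R0 + Dmu w R0 R' := by
  unfold Dmu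
  rw [← Finset.sum_add_distrib]
  refine Finset.sum_congr rfl fun S _ => ?_
  obtain ⟨-, ⟨a, b, h1, h2, h3, rfl⟩ | ⟨a, b, h1, h2, h3, rfl⟩⟩ := h
  · apply sum_symmDiff_add
    · intro x hx _
      rw [mem_MaxSet] at *
      exact ⟨hx.1, fun y hy h => hx.2 y hy ((asym_ominus h1 _ _).1 h).1⟩
    · intro x hx
      rw [mem_MaxSet] at hx
      simp only [mem_MaxSet]
      by_cases hxb : x = b
      · subst hxb
        refine .inr ⟨hx.1, fun y hy h => hx.2 y hy ((asym_ominus h1 _ _).2 ⟨h3 y h, ?_⟩)⟩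
        rintro ⟨rfl, -⟩
        exact h2 h
      · exact .inl ⟨hx.1, fun y hy h => hx.2 y hy ((asym_ominus h1 _ _).2 ⟨h, fun h => hxb h.2⟩)⟩
  · have hab := asymPart_ne h3
    apply sum_symmDiff_add
    · intro x hx hx'
      rw [mem_MaxSet] at *
      refine ⟨hx.1, fun y hy h => ?_⟩
      rcases (asym_oplus hab h1 h2 _ _).1 h with h | ⟨rfl, rfl⟩
      · exact hx.2 y hy h
      · exact hx'.2 y hy h3
    · intro x hx
      rw [mem_MaxSet] at *
      exact .inl ⟨hx.1, fun y hy h => hx.2 y hy ((asym_oplus hab h1 h2 _ _).2 (.inl h))⟩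

lemma Dmu_edge [Fintype X] [DecidableEq X] (w : X → ℝ) {R R0 : X → X → Prop} {a b : X}
    (hab : a ≠ b) (h1 : ¬ asymPart R a b)
    (h : ∀ x y, asymPart R0 x y ↔ asymPart R x y ∨ (x = a ∧ y = b)) :
    Dmu w R R0 = (2 : ℝ) ^ (Nnum R b - 1) * w b := by
  set t : Finset X := Finset.univ.filter fun x => ¬ asymPart R x b with ht
  have hsub : ({a, b} : Finset X) ⊆ t := by
    intro x hx
    simp only [Finset.mem_insert, Finset.mem_singleton] at hx
    rcases hx with rfl | rfl
    · simp [ht, h1]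
    · simp [ht, asym_irrefl]
  have key : ∀ S : Finset X, ∑ x ∈ symmDiff (MaxSet S R) (MaxSet S R0), w x =
      if S ∈ Finset.Icc ({a, b} : Finset X) t then w b else 0 := by
    intro S
    have hmem : ∀ x, x ∈ symmDiff (MaxSet S R) (MaxSet S R0) ↔
        x = b ∧ S ∈ Finset.Icc ({a, b} : Finset X) t := by
      intro x
      simp only [Finset.mem_symmDiff, mem_MaxSet, Finset.mem_Icc, Finset.le_eq_subset, h]
      constructor
      · rintro (⟨⟨hx, hm⟩, h2⟩ | ⟨⟨hx, hm⟩, h2⟩)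
        · push Not at h2
          obtain ⟨y, hy, h3⟩ := h2 hx
          rcases h3 with h3 | ⟨rfl, rfl⟩
          · exact absurd h3 (hm y hy)
          · refine ⟨rfl, ?_, ?_⟩
            · intro z hz
              simp only [Finset.mem_insert, Finset.mem_singleton] at hz
              rcases hz with rfl | rfl <;> assumption
            · intro z hz
              simpa [ht] using hm z hz
        · exact absurd ⟨hx, fun y hy h3 => hm y hy (.inl h3)⟩ h2
      · rintro ⟨rfl, h2, h3⟩
        have ha : a ∈ S := h2 (by simp)
        have hb : x ∈ S := h2 (by simp)
        refine .inl ⟨⟨hb, fun y hy => by simpa [ht] using h3 hy⟩, ?_⟩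
        rintro ⟨-, h4⟩
        exact h4 a ha (.inr ⟨rfl, rfl⟩)
    split_ifs with hS
    · have : symmDiff (MaxSet S R) (MaxSet S R0) = {b} := by
        ext x; rw [hmem]; simp [hS]
      rw [this, Finset.sum_singleton]
    · have : symmDiff (MaxSet S R) (MaxSet S R0) = ∅ := by
        ext x; rw [hmem]; simp [hS]
      rw [this, Finset.sum_empty]
  have hcard : t.card = Nnum R b + 1 := by
    have : t = insert b (Finset.univ.filter fun x => x ≠ b ∧ ¬ asymPart R x b) := by
      ext x
      by_cases hx : x = b
      · subst hx; simp [ht, asym_irrefl]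
      · simp [ht, hx]
    rw [this, Finset.card_insert_of_notMem (by simp)]
    unfold Nnum
    congr!
  unfold Dmu
  simp only [key]
  rw [Finset.sum_ite_mem, Finset.univ_inter, Finset.sum_const, Finset.card_Icc_finset hsub,
    hcard, Finset.card_pair hab, nsmul_eq_mul]
  simp

lemma Nnum_Rab [Fintype X] {a b : X} (hab : a ≠ b) : Nnum (RabRel a b) b = 1 := by
  unfold Nnum
  rw [Finset.card_eq_one]
  refine ⟨a, ?_⟩
  ext x
  simp only [Finset.mem_filter, Finset.mem_univ, true_and, Finset.mem_singleton, asym_Rab]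
  constructor
  · rintro ⟨h1, h2⟩
    by_contra h3
    exact h2 ⟨⟨h3, h1⟩, by simp⟩
  · rintro rfl
    exact ⟨hab, fun h => h.1.1 rfl⟩

lemma Dmu_Rab [Fintype X] [DecidableEq X] (w : X → ℝ) {a b : X} (hab : a ≠ b) :
    Dmu w (RabRel a b) (RabPlusRel a b) = w b := by
  rw [Dmu_edge w hab (fun h => ((asym_Rab _ _ _ _).1 h).1.1 rfl) (asym_RabPlus hab),
    Nnum_Rab hab]
  simp

lemma Nnum_ominus [Fintype X] {R : X → X → Prop} {a b : X}
    (h : asymPart R a b) : Nnum (ominusR R a b) b = Nnum R b + 1 := by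
  have hab := asymPart_ne h
  unfold Nnum
  have : (Finset.univ.filter fun x => x ≠ b ∧ ¬ asymPart (ominusR R a b) x b) =
      insert a (Finset.univ.filter fun x => x ≠ b ∧ ¬ asymPart R x b) := by
    ext x
    simp only [Finset.mem_filter, Finset.mem_univ, true_and, Finset.mem_insert, asym_ominus h]
    by_cases hx : x = a
    · subst hx; simp [hab]
    · simp [hx]
  rw [this, Finset.card_insert_of_notMem (by simp [h])]

lemma Dmu_ominus [Fintype X] [DecidableEq X] (w : X → ℝ) {R : X → X → Prop} {a b : X}
    (h : asymPart R a b) : Dmu w R (ominusR R a b) = (2 : ℝ) ^ (Nnum R b) * w b := by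
  have hab := asymPart_ne h
  rw [Dmu_comm, Dmu_edge w (a := a) (b := b) hab]
  · rw [Nnum_ominus h]; simp
  · rw [asym_ominus h]; simp
  · intro x y
    rw [asym_ominus h]
    by_cases hx : x = a ∧ y = b
    · obtain ⟨rfl, rfl⟩ := hx; simp [h]
    · simp [hx]

/-- Size of the symmetric difference of the asymmetric parts. -/
noncomputable def asymDist [Fintype X] (R R' : X → X → Prop) : ℕ :=
  (Finset.univ.filter fun p : X × X => ¬ (asymPart R p.1 p.2 ↔ asymPart R' p.1 p.2)).card

lemma asymDist_lt [Fintype X] {R R0 R' : X → X → Prop} (h : OneStep R R0 R') :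
    asymDist R0 R' < asymDist R R' := by
  unfold asymDist
  apply Finset.card_lt_card
  rw [Finset.ssubset_iff_of_subset]
  · obtain ⟨-, ⟨a, b, h1, h2, h3, rfl⟩ | ⟨a, b, h1, h2, h3, rfl⟩⟩ := h
    · refine ⟨(a, b), by simp [h1, h2], ?_⟩
      simp [asym_ominus h1, h2]
    · refine ⟨(a, b), by simp [h1, h3], ?_⟩
      simp [asym_oplus (asymPart_ne h3) h1 h2, h3]
  · rintro ⟨x, y⟩
    simp only [Finset.mem_filter, Finset.mem_univ, true_and]
    obtain ⟨-, ⟨a, b, h1, h2, h3, rfl⟩ | ⟨a, b, h1, h2, h3, rfl⟩⟩ := h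
    · rw [asym_ominus h1]
      by_cases hx : x = a ∧ y = b
      · obtain ⟨rfl, rfl⟩ := hx; simp [h1, h2]
      · simp [hx]
    · rw [asym_oplus (asymPart_ne h3) h1 h2]
      by_cases hx : x = a ∧ y = b
      · obtain ⟨rfl, rfl⟩ := hx; simp [h3]
      · simp [hx]

lemma inBetween_of_oneStep {R R0 R' : X → X → Prop} (h : OneStep R R0 R') : InBetween R R' R0 :=
  ⟨0, fun _ => R0, h, fun i => i.elim0, rfl⟩

/-- The trivial order with the pairs `(a, b)`, `a ∈ A` added. -/
def starRel (A : Set X) (b : X) : X → X → Prop := fun x y => x = y ∨ (x ∈ A ∧ y = b)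

lemma asym_star {A : Set X} {b : X} (hb : b ∉ A) (x y : X) :
    asymPart (starRel A b) x y ↔ x ∈ A ∧ y = b := by
  unfold asymPart starRel
  constructor
  · rintro ⟨rfl | h, h2⟩
    · exact absurd (.inl rfl) h2
    · exact h
  · rintro ⟨h1, rfl⟩
    refine ⟨.inr ⟨h1, rfl⟩, ?_⟩
    rintro (rfl | h)
    · exact hb h1
    · exact hb h.1

lemma acyclicOrd_star {A : Set X} {b : X} (hb : b ∉ A) : AcyclicOrd (starRel A b) := by
  refine ⟨fun x => .inl rfl, acyclic_of_rank (fun x => if x = b then 1 else 0) ?_⟩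
  intro x y h
  obtain ⟨h1, rfl⟩ := (asym_star hb x y).1 h
  have : x ≠ y := by rintro rfl; exact hb h1
  simp [this]

lemma oplus_star {A : Set X} {a b : X} (hb : b ∉ A) (hab : a ≠ b) :
    oplusR (starRel A b) a b = starRel (insert a A) b := by
  funext x y
  have : ¬ starRel A b b a := by
    rintro (rfl | h)
    · exact hab rfl
    · exact hb h.1
  simp only [oplusR, this, starRel, Set.mem_insert_iff, eq_iff_iff]
  tauto

lemma Nnum_star [Fintype X] {A : Set X} {a b : X} (hb : b ∉ A) (hab : a ≠ b) (ha : a ∉ A) :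
    Nnum (starRel A b) b = Nnum (starRel (insert a A) b) b + 1 := by
  unfold Nnum
  have : (Finset.univ.filter fun x => x ≠ b ∧ ¬ asymPart (starRel A b) x b) =
      insert a (Finset.univ.filter fun x => x ≠ b ∧ ¬ asymPart (starRel (insert a A) b) x b) := by
    ext x
    have hb' : b ∉ insert a A := by simp [hb, hab.symm]
    simp only [Finset.mem_filter, Finset.mem_univ, true_and, Finset.mem_insert, asym_star hb,
      asym_star hb', Set.mem_insert_iff]
    by_cases hx : x = a
    · subst hx; simp [hab, ha]
    · simp [hx]
  rw [this, Finset.card_insert_of_notMem]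
  have hb' : b ∉ insert a A := by simp [hb, hab.symm]
  simp [asym_star hb']

/-- The constants in Axiom 3 depend on `b` only. -/
lemma const_eq [Fintype X] {d : (X → X → Prop) → (X → X → Prop) → ℝ}
    (A1 : Axiom1 d) (A3 : Axiom3 d) {a a' b : X} (ha : a ≠ b) (ha' : a' ≠ b) :
    d (RabRel a b) (RabPlusRel a b) = d (RabRel a' b) (RabPlusRel a' b) := by
  by_cases haa : a = a'
  · rw [haa]
  have main : ∀ a a' : X, a ≠ b → a' ≠ b → a ≠ a' → ∃ m : ℕ,
      Nnum (starRel (∅ : Set X) b) b = m + 2 ∧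
      d (starRel ∅ b) (starRel {a, a'} b) = (2 : ℝ) ^ (m + 1) * d (RabRel a b) (RabPlusRel a b) +
        (2 : ℝ) ^ m * d (RabRel a' b) (RabPlusRel a' b) := by
    intro a a' ha ha' haa
    have b0 : b ∉ (∅ : Set X) := by simp
    have b1 : b ∉ ({a} : Set X) := by simpa using ha.symm
    have b2 : b ∉ ({a, a'} : Set X) := by simp [ha.symm, ha'.symm]
    have e1 : oplusR (starRel ∅ b) a b = starRel {a} b := by
      rw [oplus_star b0 ha]; simp
    have e2 : oplusR (starRel {a} b) a' b = starRel {a, a'} b := by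
      rw [oplus_star b1 ha', Set.pair_comm]
    have n1 : Nnum (starRel (∅ : Set X) b) b = Nnum (starRel ({a} : Set X) b) b + 1 := by
      rw [Nnum_star b0 ha (by simp)]; simp
    have n2 : Nnum (starRel ({a} : Set X) b) b = Nnum (starRel ({a, a'} : Set X) b) b + 1 := by
      rw [Nnum_star b1 ha' (by simpa using Ne.symm haa), Set.pair_comm]
    have hstep : OneStep (starRel ∅ b) (starRel {a} b) (starRel {a, a'} b) := by
      refine ⟨acyclicOrd_star b1, .inr ⟨a, b, ?_, ?_, ?_, e1.symm⟩⟩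
      · simp [asym_star b0]
      · simp [asym_star b0]
      · simp [asym_star b2]
    have hd := A1 _ _ _ (acyclicOrd_star b0) (acyclicOrd_star b2) (inBetween_of_oneStep hstep)
    have d1 := A3.1 (starRel ∅ b) a b (acyclicOrd_star b0) ha (by simp [asym_star b0])
      (by simp [asym_star b0]) (by rw [e1]; exact acyclicOrd_star b1)
    have d2 := A3.1 (starRel {a} b) a' b (acyclicOrd_star b1) ha'
      (by simpa [asym_star b1] using Ne.symm haa)
      (by simp [asym_star b1, ha.symm]) (by rw [e2]; exact acyclicOrd_star b2)
    refine ⟨Nnum (starRel ({a, a'} : Set X) b) b, by omega, ?_⟩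
    rw [e1, n1, n2] at d1
    rw [e2, n2] at d2
    rw [hd, d1, d2]
    simp
  obtain ⟨m, hm, h1⟩ := main a a' ha ha' haa
  obtain ⟨m', hm', h2⟩ := main a' a ha' ha (Ne.symm haa)
  obtain rfl : m = m' := by omega
  rw [Set.pair_comm a' a, h1] at h2
  have hpos : (0 : ℝ) < 2 ^ m := by positivity
  rw [pow_succ] at h2
  have : (2 : ℝ) ^ m * d (RabRel a b) (RabPlusRel a b) =
      2 ^ m * d (RabRel a' b) (RabPlusRel a' b) := by linarith
  exact mul_left_cancel₀ hpos.ne' this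

end Helpers

/-- Theorem 3.1: a semimetric on the acyclic orders on a nonempty finite
set satisfies Axioms 1, 3 and 4 iff it is the μ-top-difference semimetric for some
positive measure μ on `2^X`. -/
theorem stmt_6 {X : Type*} [Fintype X] [DecidableEq X] [Nonempty X]
    (d : (X → X → Prop) → (X → X → Prop) → ℝ) (hd : IsSemimetricOn d) :
    (Axiom1 d ∧ Axiom3 d ∧ Axiom4 d) ↔
      ∃ w : X → ℝ, (∀ x, 0 ≤ w x) ∧
        ∀ R R' : X → X → Prop, AcyclicOrd R → AcyclicOrd R' →
          d R R' = Dmu w R R' := by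
  constructor
  · rintro ⟨A1, A3, A4⟩
    let w : X → ℝ := fun b =>
      if h : ∃ a, a ≠ b then d (RabRel h.choose b) (RabPlusRel h.choose b) else 0
    have hw : ∀ a b, a ≠ b → d (RabRel a b) (RabPlusRel a b) = w b := by
      intro a b hab
      have hex : ∃ a, a ≠ b := ⟨a, hab⟩
      have e : w b = d (RabRel hex.choose b) (RabPlusRel hex.choose b) := dif_pos hex
      rw [e]
      exact const_eq A1 A3 hab hex.choose_spec
    refine ⟨w, ?_, ?_⟩
    · intro b
      by_cases hex : ∃ a, a ≠ b
      · obtain ⟨a, hab⟩ := hex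
        rw [← hw a b hab]
        exact hd.1 _ _ (acyclicOrd_Rab a b) (acyclicOrd_RabPlus hab)
      · exact (dif_neg hex : w b = 0).ge
    · intro R R' hR hR'
      induction hn : asymDist R R' using Nat.strong_induction_on generalizing R with
      | _ n ih =>
        subst hn
        by_cases heq : ∀ x y, asymPart R x y ↔ asymPart R' x y
        · rw [A4 R R' hR hR' heq, Dmu_zero w heq]
        · obtain ⟨R0, h0⟩ := exists_oneStep hR hR' heq
          rw [A1 R R0 R' hR hR' (inBetween_of_oneStep h0), Dmu_oneStep w h0,
            ih _ (asymDist_lt h0) R0 h0.1 rfl]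
          congr 1
          obtain ⟨hac, ⟨a, b, h1, h2, h3, rfl⟩ | ⟨a, b, h1, h2, h3, rfl⟩⟩ := h0
          · rw [A3.2 R a b hR h1, Dmu_ominus w h1, hw a b (asymPart_ne h1)]
          · have hab := asymPart_ne h3
            rw [A3.1 R a b hR hab h1 h2 hac, Dmu_edge w hab h1 (asym_oplus hab h1 h2),
              hw a b hab]
  · rintro ⟨w, hw0, hw⟩
    have hab' : ∀ a b : X, a ≠ b → d (RabRel a b) (RabPlusRel a b) = w b := fun a b hab => by
      rw [hw _ _ (acyclicOrd_Rab a b) (acyclicOrd_RabPlus hab), Dmu_Rab w hab]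
    refine ⟨?_, ⟨?_, ?_⟩, ?_⟩
    · rintro R R0 R' hR hR' ⟨n, c, h0, hs, rfl⟩
      have hac : ∀ i, AcyclicOrd (c i) := by
        intro i
        induction i using Fin.cases with
        | zero => exact h0.1
        | succ i => exact (hs i).1
      have step : ∀ P Q, AcyclicOrd P → OneStep P Q R' → d P R' = d P Q + d Q R' := by
        intro P Q hP hPQ
        rw [hw _ _ hP hR', hw _ _ hP hPQ.1, hw _ _ hPQ.1 hR', Dmu_oneStep w hPQ]
      have key : ∀ i, d R R' = d R (c i) + d (c i) R' := by
        intro i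
        induction i using Fin.induction with
        | zero => exact step _ _ hR h0
        | succ i ih =>
          have e := step _ _ (hac _) (hs i)
          have t1 := hd.2.2.2 _ _ _ hR (hac i.succ) hR'
          have t2 := hd.2.2.2 _ _ _ hR (hac i.castSucc) (hac i.succ)
          linarith
      exact key _
    · intro R a b hR hab h1 h2 hac
      rw [hw _ _ hR hac, hab' a b hab, Dmu_edge w hab h1 (asym_oplus hab h1 h2)]
    · intro R a b hR h
      rw [hw _ _ hR (acyclicOrd_ominus hR h), hab' a b (asymPart_ne h), Dmu_ominus w h]
    · intro R R' hR hR' h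
      rw [hw _ _ hR hR', Dmu_zero w h]
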